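/- Let n ≥ 5, let G be a subgroup of the symmetric group S_n, and let C be any subset of S_n with |C| = |G|. If |{σ ∈ C : σ has no fixed points}| / |C| = D_n / n!, then G = A_n or G = S_n. -/

import Mathlib

/-!
Since `|C| = |G|`, the hypothesis says that the index of `G` divides `D_n`. The congruence
`D_n ≡ ± D_j` modulo `n - j`, with `D_0 = D_2 = 1` and `D_3 = 2`, makes the index coprime to `n`,
to `n - 2` and, for even `n`, to `n - 3`. Coprimality to `n` gives transitivity. A system of
imprimitivity with blocks of size `b` would force `(n - 1).choose (b - 1)` to divide the index; for
`b ≥ 3` the other coprimalities rule this out, and for `b = 2` the group `G` contains a cycle of odd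
prime length dividing `n - 3`, which cannot respect the blocks. So `G` is primitive.

A prime `q ≤ n` not dividing the index yields a `q`-cycle in `G`, which by Jordan's theorem makes
`G` `(n - q + 1)`-transitive. If `2 * q ≤ n + 1`, some conjugate of the cycle in `G` has support
meeting that of the cycle in a single point, and the commutator of the two is a 3-cycle; hence
`A_n ≤ G`. Such a prime exists unless `n = 7`: otherwise `n` and `n - 2` would be prime, `n - 3` a
power of 2 and `n - 4` a power of 3. For `n = 7` a 5-cycle bounds the index by 6.
-/

open MulAction Equiv Equiv.Perm
open scoped Pointwise Nat commutatorElement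

theorem numDerangements_add_modEq (m j : ℕ) :
    (numDerangements (m + j) : ℤ) ≡ (-1) ^ m * numDerangements j [ZMOD m] := by
  induction j with
  | zero =>
    cases m with
    | zero => rfl
    | succ k =>
      rw [add_zero, numDerangements_succ, Int.modEq_iff_dvd]
      exact ⟨-numDerangements k, by rw [numDerangements_zero]; push_cast; ring⟩
  | succ j ih =>
    rw [← add_assoc, numDerangements_succ, numDerangements_succ]
    calc ((m + j : ℕ) + 1 : ℤ) * numDerangements (m + j) - (-1) ^ (m + j)
        ≡ (j + 1) * ((-1) ^ m * numDerangements j) - (-1) ^ (m + j) [ZMOD m] := by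
          gcongr
          simp [Int.modEq_iff_dvd]
      _ = (-1) ^ m * ((j + 1) * numDerangements j - (-1) ^ j) := by ring

theorem gcd_sub_numDerangements {n j : ℕ} (hj : j ≤ n) :
    (n - j).gcd (numDerangements n) = (n - j).gcd (numDerangements j) := by
  obtain ⟨m, rfl⟩ := Nat.exists_eq_add_of_le' hj
  have h : Int.gcd (numDerangements (m + j)) m = Int.gcd ((-1) ^ m * numDerangements j) m := by
    rw [← Int.gcd_emod, numDerangements_add_modEq m j, Int.gcd_emod]
  simpa [Int.gcd, Int.natAbs_mul, Int.natAbs_pow, Nat.gcd_comm] using h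

theorem dvd_numDerangements_iff_of_dvd_sub {n j q : ℕ} (hj : j ≤ n) (hq : q ∣ n - j) :
    q ∣ numDerangements n ↔ q ∣ numDerangements j := by
  have h := Nat.dvd_gcd_iff (k := q) (m := n - j) (n := numDerangements n)
  rw [gcd_sub_numDerangements hj, Nat.dvd_gcd_iff] at h
  tauto

theorem coprime_numDerangements (n : ℕ) : n.Coprime (numDerangements n) := by
  simpa using gcd_sub_numDerangements n.zero_le

theorem coprime_sub_two_numDerangements {n : ℕ} (hn : 2 ≤ n) :
    (n - 2).Coprime (numDerangements n) := by
  simpa [numDerangements] using gcd_sub_numDerangements hn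

theorem coprime_sub_three_numDerangements_of_even {n : ℕ} (hn : 3 ≤ n) (heven : Even n) :
    (n - 3).Coprime (numDerangements n) := by
  have hodd : Odd (n - 3) := Nat.Even.sub_odd hn heven (by decide)
  rw [Nat.Coprime, gcd_sub_numDerangements hn]
  exact hodd.coprime_two_right

theorem le_two_of_two_pow_eq_three_pow_add_one {k j : ℕ} (h : 2 ^ k = 3 ^ j + 1) : k ≤ 2 := by
  have h3 : 3 ^ j % 8 = 1 ∨ 3 ^ j % 8 = 3 := by
    clear h
    induction j with
    | zero => simp
    | succ j ih => rw [pow_succ]; omega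
  by_contra! hk
  have h8 : 2 ^ 3 ∣ 2 ^ k := pow_dvd_pow 2 hk
  omega

section SmallPrimes

variable {n : ℕ}

theorem sub_eq_of_prime_dvd_sub {j q : ℕ}
    (hsmall : ∀ p, p.Prime → 2 * p ≤ n + 1 → p ∣ numDerangements n)
    (hj : j < n) (hq : q.Prime) (hqj : q ∣ n - j) (hqD : ¬ q ∣ numDerangements j) : n - j = q := by
  rw [← dvd_numDerangements_iff_of_dvd_sub hj.le hqj] at hqD
  have hlarge : n + 1 < 2 * q := not_le.1 (hqD ∘ hsmall q hq)
  exact Nat.eq_of_dvd_of_lt_two_mul (by omega) hqj (by omega)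

theorem prime_sub_of_numDerangements_eq_one {j : ℕ}
    (hsmall : ∀ p, p.Prime → 2 * p ≤ n + 1 → p ∣ numDerangements n)
    (hj : j + 1 < n) (hDj : numDerangements j = 1) : (n - j).Prime := by
  have hprime := Nat.minFac_prime (n := n - j) (by omega)
  rwa [sub_eq_of_prime_dvd_sub hsmall (by omega) hprime (Nat.minFac_dvd _)
    (by rw [hDj]; exact hprime.not_dvd_one)]

theorem exists_prime_not_dvd_numDerangements (hn : 5 ≤ n) (hn7 : n ≠ 7) :
    ∃ q, q.Prime ∧ 2 * q ≤ n + 1 ∧ ¬ q ∣ numDerangements n := by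
  by_contra! hsmall
  have hn5 : n ≠ 5 := by
    rintro rfl
    exact absurd (hsmall 3 Nat.prime_three (by norm_num)) (by decide)
  have hprime : n.Prime :=
    prime_sub_of_numDerangements_eq_one (j := 0) hsmall (by omega) rfl
  have hprime₂ : (n - 2).Prime :=
    prime_sub_of_numDerangements_eq_one (j := 2) hsmall (by omega) rfl
  have hodd : n % 2 = 1 := hprime.eq_two_or_odd.resolve_left (by omega)
  have hmod : n % 3 = 1 := by
    have h₀ : ¬ 3 ∣ n := fun h => by
      have := (Nat.prime_dvd_prime_iff_eq Nat.prime_three hprime).1 h; omega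
    have h₂ : ¬ 3 ∣ n - 2 := fun h => by
      have := (Nat.prime_dvd_prime_iff_eq Nat.prime_three hprime₂).1 h; omega
    omega
  have hpow₂ : ∀ {q : ℕ}, q.Prime → q ∣ n - 3 → q = 2 := by
    intro q hq hqn
    by_contra hq2
    have := sub_eq_of_prime_dvd_sub hsmall (by omega) hq hqn
      (hq2 ∘ (Nat.prime_dvd_prime_iff_eq hq Nat.prime_two).1)
    have := hq.eq_two_or_odd
    omega
  have hpow₃ : ∀ {q : ℕ}, q.Prime → q ∣ n - 4 → q = 3 := by
    intro q hq hqn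
    by_contra hq3
    have := sub_eq_of_prime_dvd_sub hsmall (by omega) hq hqn
      (fun h : q ∣ 3 ^ 2 => hq3 ((Nat.prime_dvd_prime_iff_eq hq Nat.prime_three).1
        (hq.dvd_of_dvd_pow h)))
    exact hq3 ((Nat.prime_dvd_prime_iff_eq Nat.prime_three hq).1 (by omega)).symm
  have h₃ := Nat.eq_prime_pow_of_unique_prime_dvd (by omega) hpow₂
  have h₄ := Nat.eq_prime_pow_of_unique_prime_dvd (by omega) hpow₃
  have hexp := le_two_of_two_pow_eq_three_pow_add_one
    (h₃.symm.trans ((by omega : n - 3 = n - 4 + 1).trans (congrArg (· + 1) h₄)))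
  have := Nat.pow_le_pow_right two_pos hexp
  omega

end SmallPrimes

theorem descFactorial_dvd_choose_mul_descFactorial (n m k : ℕ) :
    n.descFactorial k ∣ n.choose m * m.descFactorial k := by
  obtain hkm | hmk := le_or_gt k m
  · refine ⟨(n - k).choose (m - k), ?_⟩
    rw [Nat.descFactorial_eq_factorial_mul_choose, Nat.descFactorial_eq_factorial_mul_choose,
      mul_left_comm, Nat.choose_mul hkm, mul_assoc]
  · simp [Nat.descFactorial_of_lt hmk]

theorem not_mul_sub_two_dvd {b c : ℕ} (hb : 3 ≤ b) (hc : 3 ≤ c) :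
    ¬ b * c - 2 ∣ (b - 1) * (b - 2) := by
  obtain ⟨a, rfl⟩ := Nat.exists_eq_add_of_le' hb
  have hbc : 2 ≤ (a + 3) * c := by nlinarith
  rintro ⟨k, hk⟩
  zify [hbc] at hk
  push_cast [show 1 ≤ a + 3 by omega, show 2 ≤ a + 3 by omega] at hk
  have hdvd : (a + 3 : ℤ) ∣ 2 * (k + 1) := ⟨c * k - a, by linear_combination hk⟩
  have hk_ge : (a + 3 : ℤ) ≤ 2 * (k + 1) := Int.le_of_dvd (by positivity) hdvd
  have hlow : (3 * a + 7 : ℤ) ≤ (a + 3) * c - 2 := by nlinarith [(mod_cast hc : (3 : ℤ) ≤ c)]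
  nlinarith

theorem not_two_mul_sub_three_dvd {b : ℕ} (hb : 3 ≤ b) (h₂ : b * 2 - 2 ∣ (b - 1) * (b - 2)) :
    ¬ b * 2 - 3 ∣ (b - 1) * (b - 2) * (b - 3) := by
  obtain ⟨a, rfl⟩ := Nat.exists_eq_add_of_le' hb
  rintro ⟨u, hu⟩
  -- Modulo `2 * b - 3`, the number `8 * (b - 1) * (b - 2) * (b - 3)` is `1 * (-1) * (-3) = 3`.
  have hdvd : (2 * a + 3 : ℤ) ∣ 3 := by
    zify [show 3 ≤ (a + 3) * 2 by omega] at hu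
    push_cast [show 1 ≤ a + 3 by omega, show 2 ≤ a + 3 by omega] at hu
    exact ⟨8 * u - (4 * a ^ 2 + 6 * a - 1), by linear_combination 8 * hu⟩
  have ha : a = 0 := by have := Int.le_of_dvd three_pos hdvd; omega
  subst ha
  revert h₂
  decide

section Index

variable {S : Type*} [Group S] (G : Subgroup S)

theorem ncard_orbit_dvd_index_mul_ncard_orbit {X : Type*} [MulAction S X] (x : X) :
    (orbit S x).ncard ∣ G.index * (orbit G x).ncard := by
  have hstab : stabilizer G x = (stabilizer S x).subgroupOf G := rfl
  rw [← index_stabilizer, ← index_stabilizer, hstab, mul_comm]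
  change _ ∣ (stabilizer S x).relIndex G * G.index
  rw [← Subgroup.inf_relIndex_right, Subgroup.relIndex_mul_index inf_le_right]
  exact Subgroup.index_dvd_of_le inf_le_left

variable {G} in
theorem exists_conj_mem_of_not_dvd_index {p : ℕ} [Fact p.Prime] {g : S}
    (hg : IsPGroup p (Subgroup.zpowers g)) (hp : ¬ p ∣ G.index) : ∃ x : S, x * g * x⁻¹ ∈ G := by
  obtain ⟨c, hc⟩ := hg.nonempty_fixed_point_of_prime_not_dvd_card (S ⧸ G) hp
  obtain ⟨x, rfl⟩ := QuotientGroup.mk_surjective c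
  have hfix : ((g * x : S) : S ⧸ G) = x := hc ⟨g, Subgroup.mem_zpowers g⟩
  refine ⟨x⁻¹, ?_⟩
  rw [inv_inv, mul_assoc]
  exact QuotientGroup.eq.1 hfix.symm

end Index

section Perm

variable {α : Type*} [Finite α]

theorem ncard_orbit_perm_set (B : Set α) :
    (orbit (Perm α) B).ncard = (Nat.card α).choose B.ncard := by
  classical
  have := Fintype.ofFinite α
  have := Set.powersetCard.isPretransitive (α := α) (n := B.ncard)
  let s : Set.powersetCard α B.ncard :=
    ⟨B.toFinset, by simp [Set.powersetCard.mem_iff, Set.ncard_eq_toFinset_card']⟩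
  have hs : (s : Set α) = B := by ext x; simp [s]
  rw [← index_stabilizer, ← hs, ← Set.powersetCard.stabilizer_coe,
    index_stabilizer_of_transitive, Set.powersetCard.card, hs]

variable {G : Subgroup (Perm α)}

theorem isPretransitive_of_coprime_index (h : (Nat.card α).Coprime G.index) :
    IsPretransitive G α := by
  cases isEmpty_or_nonempty α
  · infer_instance
  obtain ⟨x⟩ := ‹Nonempty α›
  have hdvd := ncard_orbit_dvd_index_mul_ncard_orbit G x
  rw [orbit_eq_univ, Set.ncard_univ] at hdvd
  rw [isPretransitive_iff_orbit_eq_univ x, Set.eq_univ_iff_ncard]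
  exact (Set.ncard_le_card _).antisymm
    (Nat.le_of_dvd ((Set.ncard_pos).2 (nonempty_orbit x)) (h.dvd_of_dvd_mul_left hdvd))

theorem choose_pred_dvd_index_of_isBlock [IsPretransitive G α] {B : Set α} (hB : IsBlock G B)
    (hne : B.Nonempty) : (Nat.card α - 1).choose (B.ncard - 1) ∣ G.index := by
  obtain ⟨x, -⟩ := id hne
  have hn : 0 < Nat.card α := Nat.card_pos_iff.2 ⟨⟨x⟩, inferInstance⟩
  have hb : 0 < B.ncard := (Set.ncard_pos).2 hne
  have horbit := ncard_orbit_dvd_index_mul_ncard_orbit G B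
  rw [ncard_orbit_perm_set] at horbit
  refine Nat.dvd_of_mul_dvd_mul_left hn ?_
  calc Nat.card α * (Nat.card α - 1).choose (B.ncard - 1)
      = (Nat.card α).choose B.ncard * B.ncard := by
        obtain ⟨m, hm⟩ := Nat.exists_eq_add_of_le' hn
        obtain ⟨a, ha⟩ := Nat.exists_eq_add_of_le' hb
        rw [hm, ha]
        exact Nat.add_one_mul_choose_eq m a
    _ ∣ G.index * (orbit G B).ncard * B.ncard := Nat.mul_dvd_mul_right horbit _
    _ = Nat.card α * G.index := by
        rw [← hB.ncard_block_mul_ncard_orbit_eq hne]; ring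

theorem card_sub_dvd_descFactorial_of_isBlock [IsPretransitive G α] {B : Set α}
    (hB : IsBlock G B) (hne : B.Nonempty) {k : ℕ} (hk : k ≠ 0)
    (hcoprime : (Nat.card α - k).Coprime G.index) :
    Nat.card α - k ∣ (B.ncard - 1).descFactorial k := by
  have hchoose : (Nat.card α - k).Coprime ((Nat.card α - 1).choose (B.ncard - 1)) :=
    hcoprime.coprime_dvd_right (choose_pred_dvd_index_of_isBlock hB hne)
  refine hchoose.dvd_of_dvd_mul_left (dvd_trans ?_
    (descFactorial_dvd_choose_mul_descFactorial (Nat.card α - 1) (B.ncard - 1) k))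
  obtain ⟨j, rfl⟩ := Nat.exists_eq_add_one_of_ne_zero hk
  rw [Nat.descFactorial_succ, show Nat.card α - 1 - j = Nat.card α - (j + 1) by omega]
  exact Nat.dvd_mul_right _ _

theorem index_dvd_factorial_of_isMultiplyPretransitive {k : ℕ}
    (hG : IsMultiplyPretransitive G α k) (hk : k ≤ Nat.card α) :
    G.index ∣ (Nat.card α - k)! := by
  obtain ⟨s, -, hs⟩ := Set.exists_subset_card_eq (s := (Set.univ : Set α)) (by simpa using hk)
  have hfix : 0 < (fixingSubgroup G s).index := Nat.pos_of_ne_zero Subgroup.index_ne_zero_of_finite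
  refine Nat.dvd_of_mul_dvd_mul_left hfix ?_
  rw [hG.index_of_fixingSubgroup_mul hs, ← Nat.card_perm, ← G.card_mul_index]
  exact Nat.mul_dvd_mul_right (Subgroup.index_dvd_card _) _

end Perm

section Cycle

variable {α : Type*} [Fintype α] [DecidableEq α] {G : Subgroup (Perm α)}

theorem exists_isCycle_mem_of_not_dvd_index {q : ℕ} (hq : q.Prime) (hqα : q ≤ Nat.card α)
    (hqG : ¬ q ∣ G.index) : ∃ g ∈ G, g.IsCycle ∧ g.support.card = q := by
  obtain ⟨g, hg⟩ := (exists_with_cycleType_iff (α := α) (m := {q})).2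
    ⟨by simpa using hqα, by simpa using hq.two_le⟩
  have hcycle : g.IsCycle := by rw [← card_cycleType_eq_one, hg, Multiset.card_singleton]
  have hsupp : g.support.card = q := by rw [← sum_cycleType, hg, Multiset.sum_singleton]
  have : Fact q.Prime := ⟨hq⟩
  have hpgroup : IsPGroup q (Subgroup.zpowers g) :=
    IsPGroup.of_card (n := 1) (by rw [Nat.card_zpowers, hcycle.orderOf, hsupp, pow_one])
  obtain ⟨x, hx⟩ := exists_conj_mem_of_not_dvd_index hpgroup hqG
  exact ⟨_, hx, hcycle.conj, by rw [card_support_conj, hsupp]⟩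

variable {g : Perm α}

theorem support_subset_of_isBlock {B : Set α} (hB : IsBlock G B) (hBnt : B.Nontrivial)
    (hgG : g ∈ G) (hcycle : g.IsCycle) (hprime : g.support.card.Prime) {x : α} (hxB : x ∈ B)
    (hx : x ∈ g.support) : (g.support : Set α) ⊆ B := by
  have hgB : (⟨g, hgG⟩ : G) • B = B := by
    obtain ⟨y, hyB, hyx⟩ := hBnt.exists_ne x
    by_cases hy : y ∈ g.support
    · obtain ⟨i, rfl⟩ := hcycle.exists_pow_eq (mem_support.1 hx) (mem_support.1 hy)
      have hcoprime : i.Coprime (orderOf (⟨g, hgG⟩ : G)) := by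
        rw [Subgroup.orderOf_mk, hcycle.orderOf, Nat.coprime_comm, hprime.coprime_iff_not_dvd,
          ← hcycle.orderOf, orderOf_dvd_iff_pow_eq_one]
        intro hgi
        exact hyx (by rw [hgi, Perm.one_apply])
      obtain ⟨m, hm⟩ := exists_pow_eq_self_of_coprime hcoprime
      have hmem : (⟨g, hgG⟩ : G) ^ i ∈ stabilizer G B := hB.smul_eq_of_mem hxB hyB
      rw [← hm]
      exact pow_mem hmem m
    · refine hB.smul_eq_of_mem hyB ?_
      rwa [Subgroup.mk_smul, Perm.smul_def, notMem_support.1 hy]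
  intro y hy
  obtain ⟨i, rfl⟩ := hcycle.exists_pow_eq (mem_support.1 hx) (mem_support.1 hy)
  have hmem : (⟨g, hgG⟩ : G) ^ i ∈ stabilizer G B := pow_mem hgB i
  rw [← mem_stabilizer_iff.1 hmem]
  exact Set.smul_mem_smul_set hxB

theorem card_support_le_ncard_of_isBlock [IsPretransitive G α] {B : Set α} (hB : IsBlock G B)
    (hBnt : B.Nontrivial) (hgG : g ∈ G) (hcycle : g.IsCycle) (hprime : g.support.card.Prime) :
    g.support.card ≤ B.ncard := by
  obtain ⟨x, hx⟩ := Finset.card_pos.1 hprime.pos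
  obtain ⟨y, hy⟩ := hBnt.nonempty
  obtain ⟨t, rfl⟩ := exists_smul_eq G y x
  have hsub := support_subset_of_isBlock (hB.translate t)
    (hBnt.image (MulAction.injective t)) hgG hcycle hprime (Set.smul_mem_smul_set hy) hx
  simpa [Set.ncard_smul_set] using Set.ncard_le_ncard hsub

theorem isMultiplyPretransitive_of_isCycle_mem (hG : IsPreprimitive G α) (hgG : g ∈ G)
    (hcycle : g.IsCycle) (hprime : g.support.card.Prime) :
    IsMultiplyPretransitive G α (Nat.card α - g.support.card + 1) := by
  have hcompl : (g.support : Set α).ncard + (g.support : Set α)ᶜ.ncard = Nat.card α :=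
    Set.ncard_add_ncard_compl _
  rw [Set.ncard_coe_finset] at hcompl
  obtain hfull | hpos := Nat.eq_zero_or_pos ((g.support : Set α)ᶜ).ncard
  · rw [show Nat.card α - g.support.card + 1 = 1 by omega, is_one_pretransitive_iff]
    infer_instance
  obtain ⟨k, hk⟩ := Nat.exists_eq_add_of_le' hpos
  have := isPretransitive_of_isCycle_mem hcycle hgG
  have hprim : IsPreprimitive (fixingSubgroup G (g.support : Set α)ᶜ)
      (SubMulAction.ofFixingSubgroup G (g.support : Set α)ᶜ) := by
    apply IsPreprimitive.of_prime_card
    rwa [show Nat.card (SubMulAction.ofFixingSubgroup G (g.support : Set α)ᶜ) =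
      (g.support : Set α)ᶜᶜ.ncard from Nat.card_coe_set_eq _, compl_compl, Set.ncard_coe_finset]
  have := hprime.two_le
  rw [show Nat.card α - g.support.card + 1 = k + 2 by omega]
  have := hG.isMultiplyPreprimitive hk (by omega) hprim
  exact IsMultiplyPreprimitive.isMultiplyPretransitive ..

end Cycle

section Primitive

variable {α : Type*} [Finite α] {G : Subgroup (Perm α)}

theorem ncard_ne_two_of_isBlock [IsPretransitive G α] {B : Set α} (hB : IsBlock G B)
    (hα : 5 ≤ Nat.card α) (hthree : Even (Nat.card α) → (Nat.card α - 3).Coprime G.index) :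
    B.ncard ≠ 2 := by
  classical
  have := Fintype.ofFinite α
  intro hBcard
  have hBnt : B.Nontrivial := (Set.one_lt_ncard_iff_nontrivial).1 (by omega)
  have heven : Even (Nat.card α) :=
    even_iff_two_dvd.2 (hBcard ▸ hB.ncard_dvd_card hBnt.nonempty)
  obtain ⟨q, hq, hqα⟩ := Nat.exists_prime_and_dvd (n := Nat.card α - 3) (by omega)
  have hqG : ¬ q ∣ G.index :=
    hq.coprime_iff_not_dvd.1 ((hthree heven).coprime_dvd_left hqα)
  obtain ⟨g, hgG, hcycle, rfl⟩ := exists_isCycle_mem_of_not_dvd_index hq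
    ((Nat.le_of_dvd (by omega) hqα).trans (Nat.sub_le _ _)) hqG
  have hle := card_support_le_ncard_of_isBlock hB hBnt hgG hcycle hq
  have htwo := hq.two_le
  have heq : g.support.card = 2 := by omega
  rw [heq] at hqα
  obtain ⟨k, hk⟩ := heven
  omega

theorem isPreprimitive_of_coprime_index (hα : 5 ≤ Nat.card α)
    (hzero : (Nat.card α).Coprime G.index) (htwo : (Nat.card α - 2).Coprime G.index)
    (hthree : Even (Nat.card α) → (Nat.card α - 3).Coprime G.index) : IsPreprimitive G α := by
  have := isPretransitive_of_coprime_index hzero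
  refine ⟨fun {B} hB => or_iff_not_imp_left.2 fun hBnt => ?_⟩
  rw [Set.not_subsingleton_iff] at hBnt
  by_contra hBuniv
  obtain ⟨c, hmul⟩ := hB.ncard_dvd_card hBnt.nonempty
  have hb : 3 ≤ B.ncard := by
    have := (Set.one_lt_ncard_iff_nontrivial).2 hBnt
    have := ncard_ne_two_of_isBlock hB hα hthree
    omega
  have hc : 2 ≤ c := by
    by_contra! hc
    refine hBuniv (hB.eq_univ_of_card_lt ?_)
    rw [hmul]
    gcongr
  have hdvd₂ : B.ncard * c - 2 ∣ (B.ncard - 1) * (B.ncard - 2) := by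
    simpa [← hmul, Nat.descFactorial, Nat.sub_sub, mul_comm] using
      card_sub_dvd_descFactorial_of_isBlock hB hBnt.nonempty two_ne_zero htwo
  obtain rfl | hc := hc.eq_or_lt
  · have hdvd₃ : B.ncard * 2 - 3 ∣ (B.ncard - 1) * (B.ncard - 2) * (B.ncard - 3) := by
      simpa [← hmul, Nat.descFactorial, Nat.sub_sub, mul_comm, mul_assoc, mul_left_comm] using
        card_sub_dvd_descFactorial_of_isBlock hB hBnt.nonempty three_ne_zero
          (hthree (hmul ▸ even_two.mul_left _))
    exact not_two_mul_sub_three_dvd hb hdvd₂ hdvd₃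
  · exact not_mul_sub_two_dvd hb hc hdvd₂

end Primitive

section Alternating

variable {α : Type*} [Fintype α] [DecidableEq α] {G : Subgroup (Perm α)}

theorem isThreeCycle_commutatorElement {g h : Perm α} {a : α}
    (hgh : g.support ∩ h.support = {a}) : IsThreeCycle ⁅g, h⁆ := by
  have hmem : ∀ x, (g x ≠ x ∧ h x ≠ x) ↔ x = a := fun x => by
    simpa only [Finset.mem_inter, mem_support, Finset.mem_singleton] using Finset.ext_iff.1 hgh x
  obtain ⟨hga, hha⟩ := (hmem a).2 rfl
  have hgha : g (h a) = h a := by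
    by_contra hne
    exact hha ((hmem _).1 ⟨hne, h.injective.ne hha⟩)
  -- Write `h = s * (s * h)`: only the transposition `s` interacts with `g`.
  set s := swap a (h a) with hs
  have hcomm : Commute g (s * h) := by
    refine Perm.Disjoint.commute fun x => or_iff_not_imp_left.2 fun hgx => ?_
    obtain rfl | hxa := eq_or_ne x a
    · exact swap_apply_right _ _
    · have hhx : h x = x := by
        by_contra hne
        exact hxa ((hmem x).1 ⟨hgx, hne⟩)
      rw [Perm.mul_apply, hhx, hs, swap_apply_of_ne_of_ne hxa]
      rintro rfl
      exact hgx hgha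
  have hcalc : ⁅g, h⁆ = swap (h a) (g a) * swap (h a) a := by
    calc ⁅g, h⁆ = g * s * (s * h * g⁻¹) * h⁻¹ := by
          simp only [commutatorElement_def, hs, mul_assoc, swap_mul_self_mul]
      _ = g * s * g⁻¹ * s := by
          rw [← hcomm.inv_left.eq]; simp [mul_assoc]
      _ = swap (h a) (g a) * swap (h a) a := by
          rw [hs, ← swap_apply_apply, hgha, swap_comm, swap_comm a]
  rw [hcalc]
  exact isThreeCycle_swap_mul_swap_same
    (fun heq => hga (g.injective (by rw [← heq, hgha, heq]))) hha hga

theorem alternatingGroup_le_of_isMultiplyPretransitive_card_support {g : Perm α}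
    (hG : IsMultiplyPretransitive G α g.support.card) (hgG : g ∈ G) (hg : g ≠ 1)
    (hcard : 2 * g.support.card ≤ Nat.card α + 1) : alternatingGroup α ≤ G := by
  have htwo : 2 ≤ g.support.card := two_le_card_support_of_ne_one hg
  have hprim : IsPreprimitive G α := isPreprimitive_of_is_two_pretransitive
    (isMultiplyPretransitive_of_le htwo (by omega))
  obtain ⟨a, ha⟩ := Finset.card_pos.1 (by omega : 0 < g.support.card)
  have hle : g.support.card ≤ (insert a g.supportᶜ).card := by
    rw [Finset.card_insert_of_notMem (by simpa using ha), Finset.card_compl,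
      ← Nat.card_eq_fintype_card]
    omega
  obtain ⟨T, haT, hTsub, hTcard⟩ := Finset.exists_subsuperset_card_eq
    (s := {a}) (by simp) (by rw [Finset.card_singleton]; omega) hle
  have hinter : g.support ∩ T = {a} := by
    ext x
    have := @hTsub x
    have := @haT a
    simp only [Finset.mem_insert, Finset.mem_compl, Finset.mem_inter, Finset.mem_singleton] at *
    grind
  have htrans : IsPretransitive G (Set.powersetCard α g.support.card) :=
    Set.powersetCard.isPretransitive_of_isMultiplyPretransitive G hG
  obtain ⟨t, ht⟩ := htrans.exists_smul_eq ⟨g.support, rfl⟩ ⟨T, hTcard⟩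
  have hconj : (t * g * (t : Perm α)⁻¹).support = T := by
    rw [support_conj, Finset.map_eq_image]
    exact congrArg Subtype.val ht
  refine alternatingGroup_le_of_isPreprimitive_of_isThreeCycle_mem hprim
    (isThreeCycle_commutatorElement (hconj ▸ hinter)) ?_
  have hconjG := G.mul_mem (G.mul_mem t.2 hgG) (G.inv_mem t.2)
  exact G.mul_mem (G.mul_mem (G.mul_mem hgG hconjG) (G.inv_mem hgG)) (G.inv_mem hconjG)

theorem alternatingGroup_le_of_index_lt_card (hα : 5 ≤ Nat.card α) (hG : G.index < Nat.card α) :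
    alternatingGroup α ≤ G := by
  refine (alternatingGroup_le_of_normal hα (N := G.normalCore) ?_).trans G.normalCore_le
  rw [Subgroup.nontrivial_iff_ne_bot]
  intro hbot
  rw [Subgroup.normalCore_eq_ker, MonoidHom.ker_eq_bot_iff] at hbot
  have hle := Nat.card_le_card_of_injective _ hbot
  rw [Nat.card_perm, Nat.card_perm] at hle
  exact hle.not_gt ((Nat.factorial_lt (Nat.pos_of_ne_zero Subgroup.index_ne_zero_of_finite)).2 hG)

theorem alternatingGroup_le_of_index_dvd_numDerangements_seven (hα : Nat.card α = 7)
    (hprim : IsPreprimitive G α) (hG : G.index ∣ numDerangements 7) : alternatingGroup α ≤ G := by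
  have hfive : ¬ 5 ∣ G.index := fun h => absurd (h.trans hG) (by decide)
  obtain ⟨g, hgG, hcycle, hsupp⟩ :=
    exists_isCycle_mem_of_not_dvd_index Nat.prime_five (by omega) hfive
  have htrans := isMultiplyPretransitive_of_isCycle_mem hprim hgG hcycle
    (hsupp ▸ Nat.prime_five)
  have hdvd : G.index ∣ Nat.gcd (numDerangements 7) 4! := by
    rw [hsupp, hα] at htrans
    refine Nat.dvd_gcd hG ?_
    simpa only [hα] using index_dvd_factorial_of_isMultiplyPretransitive htrans (by omega)
  have hle : G.index ≤ 6 := Nat.le_of_dvd (by norm_num) hdvd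
  exact alternatingGroup_le_of_index_lt_card (by omega) (by omega)

theorem alternatingGroup_le_of_index_dvd_numDerangements (hα : 5 ≤ Nat.card α)
    (hG : G.index ∣ numDerangements (Nat.card α)) : alternatingGroup α ≤ G := by
  have hprim : IsPreprimitive G α := isPreprimitive_of_coprime_index hα
    ((coprime_numDerangements _).coprime_dvd_right hG)
    ((coprime_sub_two_numDerangements (by omega)).coprime_dvd_right hG)
    fun heven => (coprime_sub_three_numDerangements_of_even (by omega) heven).coprime_dvd_right hG
  by_cases h7 : Nat.card α = 7
  · exact alternatingGroup_le_of_index_dvd_numDerangements_seven h7 hprim (h7 ▸ hG)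
  obtain ⟨q, hq, hqα, hqD⟩ := exists_prime_not_dvd_numDerangements hα h7
  obtain ⟨g, hgG, hcycle, rfl⟩ := exists_isCycle_mem_of_not_dvd_index hq (by omega)
    fun h => hqD (h.trans hG)
  have htrans := isMultiplyPretransitive_of_isCycle_mem hprim hgG hcycle hq
  have := hq.two_le
  have htrans' : IsMultiplyPretransitive G α g.support.card :=
    isMultiplyPretransitive_of_le (n := Nat.card α - g.support.card + 1) (by omega) (by omega)
  exact alternatingGroup_le_of_isMultiplyPretransitive_card_support htrans' hgG hcycle.ne_one hqα

theorem eq_alternatingGroup_or_eq_top_of_alternatingGroup_le [Nontrivial α]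
    (hG : alternatingGroup α ≤ G) : G = alternatingGroup α ∨ G = ⊤ := by
  have hindex := Subgroup.index_dvd_of_le hG
  rw [alternatingGroup.index_eq_two, Nat.dvd_prime Nat.prime_two] at hindex
  exact hindex.symm.imp eq_alternatingGroup_of_index_eq_two Subgroup.index_eq_one.1

end Alternating

theorem index_dvd_of_div_card_eq_div_card {S : Type*} [Group S] [Finite S] {G : Subgroup S}
    {a d : ℕ} (h : (a : ℚ) / Nat.card G = d / Nat.card S) : G.index ∣ d := by
  have hG : (Nat.card G : ℚ) ≠ 0 := Nat.cast_ne_zero.2 Nat.card_pos.ne'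
  have hS : (Nat.card S : ℚ) ≠ 0 := Nat.cast_ne_zero.2 Nat.card_pos.ne'
  rw [div_eq_div_iff hG hS] at h
  refine ⟨a, Nat.eq_of_mul_eq_mul_right (Nat.card_pos (α := G)) ?_⟩
  rw [mul_right_comm, mul_comm G.index, G.card_mul_index, mul_comm _ a]
  exact_mod_cast h.symm

theorem derangement_proportion_subset_implies_alternating_or_symmetric_general
    {α : Type*} [Fintype α] [DecidableEq α] (hα : 5 ≤ Nat.card α) (G : Subgroup (Perm α))
    (C : Set (Perm α)) (hcard : C.ncard = Nat.card G)
    (h : ({σ ∈ C | ∀ x, σ x ≠ x}.ncard : ℚ) / (C.ncard : ℚ)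
        = (numDerangements (Nat.card α) : ℚ) / ((Nat.card α)! : ℚ)) :
    G = alternatingGroup α ∨ G = ⊤ := by
  have : Nontrivial α := Finite.one_lt_card_iff_nontrivial.1 (by omega)
  rw [hcard, ← Nat.card_perm] at h
  exact eq_alternatingGroup_or_eq_top_of_alternatingGroup_le
    (alternatingGroup_le_of_index_dvd_numDerangements hα (index_dvd_of_div_card_eq_div_card h))

theorem derangement_proportion_subset_implies_alternating_or_symmetric
    (n : ℕ) (hn : 5 ≤ n) (G : Subgroup (Equiv.Perm (Fin n)))
    (C : Set (Equiv.Perm (Fin n))) (hcard : C.ncard = Nat.card G)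
    (h : ({σ ∈ C | ∀ x, σ x ≠ x}.ncard : ℚ) / (C.ncard : ℚ)
        = (numDerangements n : ℚ) / (Nat.factorial n : ℚ)) :
    G = alternatingGroup (Fin n) ∨ G = ⊤ :=
  derangement_proportion_subset_implies_alternating_or_symmetric_general
    (by simpa using hn) G C hcard (by simpa using h)
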